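/- arXiv:2510.19961 — 4 statements merged into one kernel-verified Lean document; each statement's English description precedes it below -/
import Mathlib

section
/- Let (Q,·,e) be a loop satisfying the automorphic inverse property (AIP): (x·y)^r = x^r·y^r for all x,y ∈ Q. Then the middle nucleus Nuc_m(Q) is contained in the commutant C(Q), and the three pairwise intersections Nuc_ℓ(Q)∩Nuc_m(Q), Nuc_ℓ(Q)∩Nuc_r(Q), Nuc_r(Q)∩Nuc_m(Q) all equal the center Z(Q) = C(Q) ∩ Nuc_ℓ(Q) ∩ Nuc_m(Q) ∩ Nuc_r(Q). -/
/-- A loop `(Q, ·, e)`: a quasigroup with two-sided identity, presented with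
explicit left division `ldiv a b = a \ b` and right division `rdiv b a = b / a`. -/
structure LoopStr (Q : Type*) where
  mul : Q → Q → Q
  e : Q
  ldiv : Q → Q → Q
  rdiv : Q → Q → Q
  one_mul : ∀ x, mul e x = x
  mul_one : ∀ x, mul x e = x
  mul_ldiv : ∀ a b, mul a (ldiv a b) = b
  ldiv_mul : ∀ a b, ldiv a (mul a b) = b
  rdiv_mul : ∀ a b, mul (rdiv b a) a = b
  mul_rdiv : ∀ a b, rdiv (mul b a) a = b

namespace LoopStr

variable {Q : Type*} (S : LoopStr Q)

/-- The left inverse `x^ℓ = e / x`. -/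
def linv (x : Q) : Q := S.rdiv S.e x

/-- The right inverse `x^r = x \ e`. -/
def rinv (x : Q) : Q := S.ldiv x S.e

/-- The left nucleus. -/
def lnuc : Set Q := {a | ∀ x y, S.mul (S.mul a x) y = S.mul a (S.mul x y)}

/-- The middle nucleus. -/
def mnuc : Set Q := {a | ∀ x y, S.mul (S.mul x a) y = S.mul x (S.mul a y)}

/-- The right nucleus. -/
def rnuc : Set Q := {a | ∀ x y, S.mul (S.mul x y) a = S.mul x (S.mul y a)}

/-- The commutant `C(Q)`. -/
def commutant : Set Q := {a | ∀ x, S.mul a x = S.mul x a}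

/-- The center `Z(Q) = C(Q) ∩ Nuc_ℓ ∩ Nuc_m ∩ Nuc_r`. -/
def center : Set Q := S.commutant ∩ S.lnuc ∩ S.mnuc ∩ S.rnuc

/-- The left translation `L_a` as a map. -/
def leftMul (a : Q) : Q → Q := fun x => S.mul a x

/-- The left translation `L_a` as a permutation of `Q`. -/
def leftPerm (a : Q) : Equiv.Perm Q :=
  ⟨fun x => S.mul a x, fun x => S.ldiv a x, S.ldiv_mul a, S.mul_ldiv a⟩

/-- The right translation `R_a` as a permutation of `Q`. -/
def rightPerm (a : Q) : Equiv.Perm Q :=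
  ⟨fun x => S.mul x a, fun x => S.rdiv x a, fun x => S.mul_rdiv a x, fun x => S.rdiv_mul a x⟩

/-- The multiplication group `Mlt(Q) = ⟨L_x, R_x : x ∈ Q⟩ ≤ Sym(Q)`. -/
def Mlt : Subgroup (Equiv.Perm Q) :=
  Subgroup.closure (Set.range S.leftPerm ∪ Set.range S.rightPerm)

/-- `x^n = L_x^n(e)` for natural `n`. -/
def npow (a : Q) (n : ℕ) : Q := (S.leftPerm a ^ n) S.e

/-- `x^n = L_x^n(e)` for integer `n`. -/
def zpow (a : Q) (n : ℤ) : Q := (S.leftPerm a ^ n) S.e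

/-- The order of an element: the least `n > 0` with `x^n = e` (or `0` if none exists). -/
noncomputable def lorder (a : Q) : ℕ := sInf {n : ℕ | 0 < n ∧ S.npow a n = S.e}

/-- A subloop: contains `e`, closed under multiplication and both divisions. -/
def IsSubloop (N : Set Q) : Prop :=
  S.e ∈ N ∧ (∀ a ∈ N, ∀ b ∈ N, S.mul a b ∈ N) ∧
    (∀ a ∈ N, ∀ b ∈ N, S.ldiv a b ∈ N) ∧ (∀ a ∈ N, ∀ b ∈ N, S.rdiv a b ∈ N)

/-- A normal subloop: a subloop with `xN = Nx`, `(xN)y = x(Ny)`, `N(xy) = (Nx)y`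
elementwise as sets. -/
def IsNormalSubloop (N : Set Q) : Prop :=
  S.IsSubloop N ∧
  (∀ x : Q, (fun a => S.mul x a) '' N = (fun a => S.mul a x) '' N) ∧
  (∀ x y : Q, (fun a => S.mul (S.mul x a) y) '' N = (fun a => S.mul x (S.mul a y)) '' N) ∧
  (∀ x y : Q, (fun a => S.mul a (S.mul x y)) '' N = (fun a => S.mul (S.mul a x) y) '' N)

/-- A loop is simple if its only normal subloops are `{e}` and `Q`. -/
def IsSimple : Prop :=
  ∀ N : Set Q, S.IsNormalSubloop N → N = {S.e} ∨ N = Set.univ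

lemma mul_rinv (x : Q) : S.mul x (S.rinv x) = S.e := S.mul_ldiv x S.e

lemma linv_mul (x : Q) : S.mul (S.linv x) x = S.e := S.rdiv_mul x S.e

lemma linv_rinv (x : Q) : S.linv (S.rinv x) = x := by
  have h := S.mul_rdiv (S.rinv x) x
  rw [S.mul_rinv] at h
  exact h

lemma rinv_linv (x : Q) : S.rinv (S.linv x) = x := by
  have h := S.ldiv_mul (S.linv x) x
  rw [S.linv_mul] at h
  exact h

lemma rinv_e : S.rinv S.e = S.e := by
  have h := S.ldiv_mul S.e S.e
  rw [S.one_mul] at h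
  exact h

lemma rdiv_e (x : Q) : S.rdiv x S.e = x := by
  have h := S.mul_rdiv S.e x
  rw [S.mul_one] at h
  exact h

/-- The principal right isostrophe `(Q, ∘)` of `(Q, ·)`, with `x ∘ y = x / (y^r)`,
right division `x // y = x·(y^r)` and left division `x \\ y = (y \ x)^ℓ`. -/
def iso : LoopStr Q where
  mul x y := S.rdiv x (S.rinv y)
  e := S.e
  ldiv x y := S.linv (S.ldiv y x)
  rdiv x y := S.mul x (S.rinv y)
  one_mul x := S.linv_rinv x
  mul_one x := by
    show S.rdiv x (S.rinv S.e) = x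
    rw [S.rinv_e, S.rdiv_e]
  mul_ldiv a b := by
    show S.rdiv a (S.rinv (S.linv (S.ldiv b a))) = b
    rw [S.rinv_linv]
    have h := S.mul_rdiv (S.ldiv b a) b
    rw [S.mul_ldiv] at h
    exact h
  ldiv_mul a b := by
    show S.linv (S.ldiv (S.rdiv a (S.rinv b)) a) = b
    have h := S.ldiv_mul (S.rdiv a (S.rinv b)) (S.rinv b)
    rw [S.rdiv_mul] at h
    rw [h, S.linv_rinv]
  rdiv_mul a b := by
    show S.rdiv (S.mul b (S.rinv a)) (S.rinv a) = b
    exact S.mul_rdiv (S.rinv a) b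
  mul_rdiv a b := by
    show S.mul (S.rdiv b (S.rinv a)) (S.rinv a) = b
    exact S.rdiv_mul (S.rinv a) b

end LoopStr

/-!
In any loop, an element `a` of `Nuc_m` or of `Nuc_ℓ ∩ Nuc_r` satisfies `L_{a^r} = L_a⁻¹` and
`R_{a^r} = R_a⁻¹`, and inversion reverses products with `a`, as in a group: `(xa)^r = a^r x^r` for
`a ∈ Nuc_m`, and `(ax)^r = x^r a^r` for `a ∈ Nuc_ℓ ∩ Nuc_r`. The AIP says that inversion preserves
the order of these products. Since `x ↦ x^r` is onto, `a^r` therefore commutes with everything: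
`L_a⁻¹ = R_a⁻¹`, that is, `L_a = R_a`. Finally, a commuting element that lies in two of the nuclei
lies in the third.
-/

namespace LoopStr

variable {Q : Type*} {S : LoopStr Q} {a x y : Q}

lemma mul_left_cancel (h : S.mul a x = S.mul a y) : x = y :=
  (S.leftPerm a).injective h

lemma mul_right_cancel (h : S.mul x a = S.mul y a) : x = y :=
  (S.rightPerm a).injective h

lemma rinv_eq_of_mul_eq_e (h : S.mul x y = S.e) : S.rinv x = y :=
  mul_left_cancel ((S.mul_rinv x).trans h.symm)

lemma rinv_surjective : Function.Surjective S.rinv :=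
  fun x => ⟨S.linv x, S.rinv_linv x⟩

lemma mem_commutant_of_forall_rinv (h : ∀ x, S.mul a (S.rinv x) = S.mul (S.rinv x) a) :
    a ∈ S.commutant :=
  rinv_surjective.forall.mpr h

lemma mem_commutant_of_rinv_mem_commutant (hl : ∀ x, S.mul a (S.mul (S.rinv a) x) = x)
    (hr : ∀ x, S.mul (S.mul x a) (S.rinv a) = x) (h : S.rinv a ∈ S.commutant) :
    a ∈ S.commutant := fun x =>
  calc S.mul a x = S.mul a (S.mul (S.mul x a) (S.rinv a)) := by rw [hr]
    _ = S.mul a (S.mul (S.rinv a) (S.mul x a)) := by rw [h (S.mul x a)]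
    _ = S.mul x a := hl _

lemma mul_rinv_cancel_left_of_mem_lnuc (ha : a ∈ S.lnuc) (x : Q) :
    S.mul a (S.mul (S.rinv a) x) = x := by
  rw [← ha (S.rinv a) x, S.mul_rinv, S.one_mul]

lemma rinv_mul_cancel_of_mem_mnuc (ha : a ∈ S.mnuc) : S.mul (S.rinv a) a = S.e :=
  mul_right_cancel (a := S.rinv a) <| by
    rw [ha (S.rinv a) (S.rinv a), S.mul_rinv, S.mul_one, S.one_mul]

lemma mul_rinv_cancel_right_of_mem_mnuc (ha : a ∈ S.mnuc) (x : Q) :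
    S.mul (S.mul x a) (S.rinv a) = x := by
  rw [ha x (S.rinv a), S.mul_rinv, S.mul_one]

lemma mul_rinv_cancel_left_of_mem_mnuc (ha : a ∈ S.mnuc) (x : Q) :
    S.mul a (S.mul (S.rinv a) x) = x :=
  mul_left_cancel (a := S.rinv a) <| by
    rw [← ha (S.rinv a) (S.mul (S.rinv a) x), rinv_mul_cancel_of_mem_mnuc ha, S.one_mul]

lemma rinv_mul_cancel_of_mem_rnuc (ha : a ∈ S.rnuc) : S.mul (S.rinv a) a = S.e :=
  mul_left_cancel (a := a) <| by
    rw [← ha a (S.rinv a), S.mul_rinv, S.one_mul, S.mul_one]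

lemma rinv_mul_cancel_right_of_mem_rnuc (ha : a ∈ S.rnuc) (x : Q) :
    S.mul (S.mul x (S.rinv a)) a = x := by
  rw [ha x (S.rinv a), rinv_mul_cancel_of_mem_rnuc ha, S.mul_one]

lemma mul_rinv_cancel_right_of_mem_rnuc (ha : a ∈ S.rnuc) (x : Q) :
    S.mul (S.mul x a) (S.rinv a) = x :=
  mul_right_cancel (rinv_mul_cancel_right_of_mem_rnuc ha (S.mul x a))

lemma rinv_mem_rnuc (ha : a ∈ S.rnuc) : S.rinv a ∈ S.rnuc := fun x y =>
  mul_right_cancel (a := a) <| by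
    rw [rinv_mul_cancel_right_of_mem_rnuc ha, ha x (S.mul y (S.rinv a)),
      rinv_mul_cancel_right_of_mem_rnuc ha]

lemma rinv_mul_rev_of_mem_mnuc (ha : a ∈ S.mnuc) (x : Q) :
    S.rinv (S.mul x a) = S.mul (S.rinv a) (S.rinv x) :=
  rinv_eq_of_mul_eq_e <|
    calc S.mul (S.mul x a) (S.mul (S.rinv a) (S.rinv x))
      _ = S.mul x (S.mul a (S.mul (S.rinv a) (S.rinv x))) := ha _ _
      _ = S.mul x (S.rinv x) := by rw [mul_rinv_cancel_left_of_mem_mnuc ha]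
      _ = S.e := S.mul_rinv x

lemma rinv_mul_rev_of_mem_lnuc_of_mem_rnuc (hl : a ∈ S.lnuc) (hr : a ∈ S.rnuc) (x : Q) :
    S.rinv (S.mul a x) = S.mul (S.rinv x) (S.rinv a) :=
  rinv_eq_of_mul_eq_e <|
    calc S.mul (S.mul a x) (S.mul (S.rinv x) (S.rinv a))
      _ = S.mul a (S.mul x (S.mul (S.rinv x) (S.rinv a))) := hl _ _
      _ = S.mul a (S.mul (S.mul x (S.rinv x)) (S.rinv a)) := by
        rw [rinv_mem_rnuc hr x (S.rinv x)]
      _ = S.e := by rw [S.mul_rinv, S.one_mul, S.mul_rinv]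

lemma mem_commutant_of_mem_mnuc (ha : a ∈ S.mnuc)
    (h : ∀ x, S.rinv (S.mul x a) = S.mul (S.rinv x) (S.rinv a)) : a ∈ S.commutant :=
  mem_commutant_of_rinv_mem_commutant (mul_rinv_cancel_left_of_mem_mnuc ha)
    (mul_rinv_cancel_right_of_mem_mnuc ha) <|
    mem_commutant_of_forall_rinv fun x => (rinv_mul_rev_of_mem_mnuc ha x).symm.trans (h x)

lemma mem_commutant_of_mem_lnuc_of_mem_rnuc (hl : a ∈ S.lnuc) (hr : a ∈ S.rnuc)
    (h : ∀ x, S.rinv (S.mul a x) = S.mul (S.rinv a) (S.rinv x)) : a ∈ S.commutant :=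
  mem_commutant_of_rinv_mem_commutant (mul_rinv_cancel_left_of_mem_lnuc hl)
    (mul_rinv_cancel_right_of_mem_rnuc hr) <|
    mem_commutant_of_forall_rinv fun x =>
      (h x).symm.trans (rinv_mul_rev_of_mem_lnuc_of_mem_rnuc hl hr x)

lemma mem_rnuc_of_mem_commutant (hc : a ∈ S.commutant) (hl : a ∈ S.lnuc) (hm : a ∈ S.mnuc) :
    a ∈ S.rnuc := fun x y =>
  calc S.mul (S.mul x y) a = S.mul a (S.mul x y) := (hc _).symm
    _ = S.mul (S.mul a x) y := (hl x y).symm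
    _ = S.mul (S.mul x a) y := by rw [hc x]
    _ = S.mul x (S.mul a y) := hm x y
    _ = S.mul x (S.mul y a) := by rw [hc y]

lemma mem_mnuc_of_mem_commutant (hc : a ∈ S.commutant) (hl : a ∈ S.lnuc) (hr : a ∈ S.rnuc) :
    a ∈ S.mnuc := fun x y =>
  calc S.mul (S.mul x a) y = S.mul (S.mul a x) y := by rw [hc x]
    _ = S.mul a (S.mul x y) := hl x y
    _ = S.mul (S.mul x y) a := hc _
    _ = S.mul x (S.mul y a) := hr x y
    _ = S.mul x (S.mul a y) := by rw [hc y]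

lemma mem_lnuc_of_mem_commutant (hc : a ∈ S.commutant) (hr : a ∈ S.rnuc) (hm : a ∈ S.mnuc) :
    a ∈ S.lnuc := fun x y =>
  calc S.mul (S.mul a x) y = S.mul (S.mul x a) y := by rw [hc x]
    _ = S.mul x (S.mul a y) := hm x y
    _ = S.mul x (S.mul y a) := by rw [hc y]
    _ = S.mul (S.mul x y) a := (hr x y).symm
    _ = S.mul a (S.mul x y) := (hc _).symm

lemma lnuc_inter_mnuc_eq_center (h : S.lnuc ∩ S.mnuc ⊆ S.commutant) :
    S.lnuc ∩ S.mnuc = S.center :=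
  Set.Subset.antisymm
    (fun _ ha => ⟨⟨⟨h ha, ha.1⟩, ha.2⟩, mem_rnuc_of_mem_commutant (h ha) ha.1 ha.2⟩)
    (fun _ ⟨⟨⟨_, hl⟩, hm⟩, _⟩ => ⟨hl, hm⟩)

lemma lnuc_inter_rnuc_eq_center (h : S.lnuc ∩ S.rnuc ⊆ S.commutant) :
    S.lnuc ∩ S.rnuc = S.center :=
  Set.Subset.antisymm
    (fun _ ha => ⟨⟨⟨h ha, ha.1⟩, mem_mnuc_of_mem_commutant (h ha) ha.1 ha.2⟩, ha.2⟩)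
    (fun _ ⟨⟨⟨_, hl⟩, _⟩, hr⟩ => ⟨hl, hr⟩)

lemma rnuc_inter_mnuc_eq_center (h : S.rnuc ∩ S.mnuc ⊆ S.commutant) :
    S.rnuc ∩ S.mnuc = S.center :=
  Set.Subset.antisymm
    (fun _ ha => ⟨⟨⟨h ha, mem_lnuc_of_mem_commutant (h ha) ha.1 ha.2⟩, ha.2⟩, ha.1⟩)
    (fun _ ⟨⟨_, hm⟩, hr⟩ => ⟨hr, hm⟩)

end LoopStr

/-- In an AIP loop, the middle nucleus is contained in the commutant,
and all pairwise intersections of nuclei equal the center. -/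
theorem aip_nuclei_center {Q : Type*} (S : LoopStr Q)
    (hAIP : ∀ x y : Q, S.rinv (S.mul x y) = S.mul (S.rinv x) (S.rinv y)) :
    S.mnuc ⊆ S.commutant ∧
    S.lnuc ∩ S.mnuc = S.center ∧
    S.lnuc ∩ S.rnuc = S.center ∧
    S.rnuc ∩ S.mnuc = S.center := by
  have hm : S.mnuc ⊆ S.commutant := fun a ha =>
    LoopStr.mem_commutant_of_mem_mnuc ha (hAIP · a)
  have hlr : S.lnuc ∩ S.rnuc ⊆ S.commutant := fun a ⟨hl, hr⟩ =>
    LoopStr.mem_commutant_of_mem_lnuc_of_mem_rnuc hl hr (hAIP a)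
  exact ⟨hm,
    LoopStr.lnuc_inter_mnuc_eq_center (Set.inter_subset_right.trans hm),
    LoopStr.lnuc_inter_rnuc_eq_center hlr,
    LoopStr.rnuc_inter_mnuc_eq_center (Set.inter_subset_right.trans hm)⟩
end

section
/- Let (Q,·,e) be a loop with principal right isostrophe (Q,∘), where x∘y = x/(y^r). Then: (1) (Q,·) has left nuclear squares if and only if (Q,∘) has left nuclear squares; (2) (Q,·) has left and middle nuclear squares if and only if (Q,∘) has left and right nuclear squares. -/
/-!
An element of a loop is left, middle or right nuclear exactly when it equals `α e`, `α e` or `γ e`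
for some autotopism of the form `(α, 1, α)`, `(α, β, 1)` or `(1, β, γ)`, respectively. Since
`x ∘ y = z` means `z · y^r = x`, passing to the isostrophe swaps the first and third components of
an autotopism and conjugates the second by `x ↦ x^r`. Hence `∘` has the same left nucleus as `·`,
and its right nucleus is the middle nucleus of `·`. When squares are left nuclear,
`x^ℓ ∘ x^ℓ = (x · x)^r`, and these nuclei are closed under `x ↦ x^r`.
-/

namespace LoopStr

variable {Q : Type*} (S : LoopStr Q)

attribute [ext] LoopStr

/-- The right inverse map `x ↦ x^r` as a permutation of `Q`, with inverse `x ↦ x^ℓ`. -/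
def rinvPerm : Equiv.Perm Q :=
  ⟨S.rinv, S.linv, S.linv_rinv, S.rinv_linv⟩

/-- The autotopism group of a loop: the triples `(α, β, γ)` of permutations such that
`α x · β y = γ (x · y)` for all `x` and `y`. -/
def autotopisms : Subgroup (Equiv.Perm Q × Equiv.Perm Q × Equiv.Perm Q) where
  carrier := {t | ∀ x y, S.mul (t.1 x) (t.2.1 y) = t.2.2 (S.mul x y)}
  one_mem' _ _ := rfl
  mul_mem' {t u} ht hu x y := (ht (u.1 x) (u.2.1 y)).trans (congrArg t.2.2 (hu x y))
  inv_mem' {t} ht x y := by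
    apply t.2.2.injective
    simpa using (ht (t.1⁻¹ x) (t.2.1⁻¹ y)).symm

variable {S} in
lemma mem_autotopisms {α β γ : Equiv.Perm Q} :
    (α, β, γ) ∈ S.autotopisms ↔ ∀ x y, S.mul (α x) (β y) = γ (S.mul x y) :=
  Iff.rfl

lemma mul_right_injective (a : Q) : Function.Injective (S.mul a) :=
  (S.leftPerm a).injective

lemma mem_lnuc_iff_exists_autotopism {a : Q} :
    a ∈ S.lnuc ↔ ∃ α, (α, 1, α) ∈ S.autotopisms ∧ α S.e = a := by
  refine ⟨fun ha => ⟨S.leftPerm a, ha, S.mul_one a⟩, ?_⟩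
  rintro ⟨α, h, rfl⟩
  have α_apply (x : Q) : α x = S.mul (α S.e) x := by
    simpa [S.one_mul] using (h S.e x).symm
  intro x y
  rw [← α_apply, ← α_apply]
  exact h x y

lemma mem_mnuc_iff_exists_autotopism {a : Q} :
    a ∈ S.mnuc ↔ ∃ α β, (α, β, 1) ∈ S.autotopisms ∧ α S.e = a := by
  constructor
  · intro ha
    refine ⟨S.rightPerm a, (S.leftPerm a)⁻¹, fun x y => ?_, S.one_mul a⟩
    exact (ha x (S.ldiv a y)).trans (congrArg (S.mul x) (S.mul_ldiv a y))
  · rintro ⟨α, β, h, rfl⟩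
    have β_mul (z : Q) : β (S.mul (α S.e) z) = z := by
      apply S.mul_right_injective (α S.e)
      simpa [S.one_mul] using h S.e (S.mul (α S.e) z)
    have α_mul (x z : Q) : S.mul (α x) z = S.mul x (S.mul (α S.e) z) := by
      simpa [β_mul] using h x (S.mul (α S.e) z)
    have α_apply (x : Q) : α x = S.mul x (α S.e) := by
      simpa [S.mul_one] using α_mul x S.e
    intro x y
    rw [← α_apply, α_mul]

lemma mem_rnuc_iff_exists_autotopism {a : Q} :
    a ∈ S.rnuc ↔ ∃ β γ, (1, β, γ) ∈ S.autotopisms ∧ γ S.e = a := by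
  constructor
  · exact fun ha => ⟨S.rightPerm a, S.rightPerm a, fun x y => (ha x y).symm, S.one_mul a⟩
  · rintro ⟨β, γ, h, rfl⟩
    have β_apply (y : Q) : β y = γ y := by
      simpa [S.one_mul] using h S.e y
    have γ_apply (x : Q) : γ x = S.mul x (γ S.e) := by
      simpa [S.mul_one, β_apply] using (h x S.e).symm
    intro x y
    rw [← γ_apply, ← γ_apply, ← β_apply y]
    exact (h x y).symm

lemma rinv_mem_lnuc {a : Q} (ha : a ∈ S.lnuc) : S.rinv a ∈ S.lnuc := by
  have h : (S.leftPerm a, 1, S.leftPerm a) ∈ S.autotopisms := ha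
  exact S.mem_lnuc_iff_exists_autotopism.mpr ⟨(S.leftPerm a)⁻¹, by simpa using inv_mem h, rfl⟩

lemma rinv_mem_mnuc {a : Q} (ha : a ∈ S.mnuc) : S.rinv a ∈ S.mnuc := by
  obtain ⟨α, β, h, rfl⟩ := S.mem_mnuc_iff_exists_autotopism.mp ha
  refine S.mem_mnuc_iff_exists_autotopism.mpr ⟨α⁻¹, β⁻¹, by simpa using inv_mem h, ?_⟩
  have inv_apply_e : β S.e = α⁻¹ S.e := by
    simpa [S.one_mul, S.mul_one] using h (α⁻¹ S.e) S.e
  apply S.mul_right_injective (α S.e)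
  rw [mul_rinv, ← inv_apply_e, mem_autotopisms.mp h, one_mul, Equiv.Perm.one_apply]

lemma rinv_eq_linv_of_mem_mnuc {a : Q} (ha : a ∈ S.mnuc) : S.rinv a = S.linv a := by
  simpa only [S.linv_mul, S.mul_rinv, S.one_mul, S.mul_one] using ha (S.linv a) (S.rinv a)

lemma rinv_mem_mnuc_iff {a : Q} : S.rinv a ∈ S.mnuc ↔ a ∈ S.mnuc := by
  refine ⟨fun h => ?_, S.rinv_mem_mnuc⟩
  rw [← S.linv_rinv a, ← S.rinv_eq_linv_of_mem_mnuc h]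
  exact S.rinv_mem_mnuc h

lemma iso_e : S.iso.e = S.e := rfl

lemma iso_mul_eq_iff {x y z : Q} : S.iso.mul x y = z ↔ S.mul z (S.rinv y) = x :=
  ⟨fun h => h ▸ S.rdiv_mul _ _, fun h => h ▸ S.mul_rdiv _ _⟩

lemma iso_rinv (x : Q) : S.iso.rinv x = S.linv x :=
  have ldiv_e : S.ldiv S.e x = x := by simpa only [S.one_mul] using S.ldiv_mul S.e x
  congrArg S.linv ldiv_e

lemma iso_linv (x : Q) : S.iso.linv x = S.rinv x :=
  S.one_mul (S.rinv x)

lemma iso_iso : S.iso.iso = S := by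
  ext x y
  · change S.mul x (S.rinv (S.iso.rinv y)) = S.mul x y
    rw [iso_rinv, rinv_linv]
  · rfl
  · change S.iso.linv (S.linv (S.ldiv x y)) = S.ldiv x y
    rw [iso_linv, rinv_linv]
  · change S.rdiv x (S.rinv (S.iso.rinv y)) = S.rdiv x y
    rw [iso_rinv, rinv_linv]

lemma mem_iso_autotopisms_iff {α β γ : Equiv.Perm Q} :
    (α, β, γ) ∈ S.iso.autotopisms ↔
      (γ, MulAut.conj S.rinvPerm β, α) ∈ S.autotopisms := by
  have conj_apply (w : Q) : MulAut.conj S.rinvPerm β w = S.rinv (β (S.linv w)) := rfl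
  simp only [mem_autotopisms, iso_mul_eq_iff, conj_apply]
  constructor
  · intro h z w
    have mul_iso_linv : S.iso.mul (S.mul z w) (S.linv w) = z := by
      rw [iso_mul_eq_iff, rinv_linv]
    simpa only [mul_iso_linv] using h (S.mul z w) (S.linv w)
  · intro h x y
    have iso_mul_mul_rinv : S.mul (S.iso.mul x y) (S.rinv y) = x := S.iso_mul_eq_iff.mp rfl
    simpa only [linv_rinv, iso_mul_mul_rinv] using h (S.iso.mul x y) (S.rinv y)

lemma iso_lnuc : S.iso.lnuc = S.lnuc := by
  ext a
  simp only [mem_lnuc_iff_exists_autotopism, mem_iso_autotopisms_iff, map_one, iso_e]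

lemma iso_rnuc : S.iso.rnuc = S.mnuc := by
  ext a
  rw [mem_rnuc_iff_exists_autotopism, mem_mnuc_iff_exists_autotopism, exists_comm]
  exact exists_congr fun _ => (MulAut.conj S.rinvPerm).toEquiv.exists_congr fun _ =>
    and_congr_left' S.mem_iso_autotopisms_iff

lemma iso_mul_self_linv {x : Q} (hx : S.mul x x ∈ S.lnuc) :
    S.iso.mul (S.linv x) (S.linv x) = S.rinv (S.mul x x) := by
  have mul_sq_linv : S.mul (S.mul x x) (S.linv x) = x := by
    apply (S.rightPerm x).injective
    change S.mul (S.mul (S.mul x x) (S.linv x)) x = S.mul x x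
    rw [hx, linv_mul, mul_one]
  rw [iso_mul_eq_iff, rinv_linv]
  apply S.mul_right_injective (S.mul x x)
  rw [mul_sq_linv, ← hx, mul_rinv, one_mul]

lemma forall_iso_mul_self_mem_iff (hS : ∀ x, S.mul x x ∈ S.lnuc) (N : Set Q) :
    (∀ x, S.iso.mul x x ∈ N) ↔ ∀ x, S.rinv (S.mul x x) ∈ N := by
  simp only [← S.iso_mul_self_linv (hS _)]
  exact S.rinvPerm.symm.surjective.forall

lemma iso_mul_self_mem_iso_lnuc (hS : ∀ x, S.mul x x ∈ S.lnuc) (x : Q) :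
    S.iso.mul x x ∈ S.iso.lnuc := by
  rw [iso_lnuc]
  exact (S.forall_iso_mul_self_mem_iff hS S.lnuc).mpr (fun y => S.rinv_mem_lnuc (hS y)) x

lemma forall_mul_self_mem_lnuc_iff_iso_lnuc :
    (∀ x, S.mul x x ∈ S.lnuc) ↔ ∀ x, S.iso.mul x x ∈ S.iso.lnuc :=
  ⟨S.iso_mul_self_mem_iso_lnuc, fun h => by
    simpa only [iso_iso] using S.iso.iso_mul_self_mem_iso_lnuc h⟩

lemma forall_mul_self_mem_mnuc_iff_iso_rnuc (hS : ∀ x, S.mul x x ∈ S.lnuc) :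
    (∀ x, S.mul x x ∈ S.mnuc) ↔ ∀ x, S.iso.mul x x ∈ S.iso.rnuc := by
  rw [iso_rnuc, S.forall_iso_mul_self_mem_iff hS]
  simp only [rinv_mem_mnuc_iff]

end LoopStr

/-- `(Q,·)` has left nuclear squares iff its principal right isostrophe
`(Q,∘)` has left nuclear squares; and `(Q,·)` has left and middle nuclear squares iff
`(Q,∘)` has left and right nuclear squares. -/
theorem iso_nuclear_squares {Q : Type*} (S : LoopStr Q) :
    ((∀ x : Q, S.mul x x ∈ S.lnuc) ↔ (∀ x : Q, S.iso.mul x x ∈ S.iso.lnuc)) ∧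
    ((∀ x : Q, S.mul x x ∈ S.lnuc ∩ S.mnuc) ↔
      (∀ x : Q, S.iso.mul x x ∈ S.iso.lnuc ∩ S.iso.rnuc)) := by
  refine ⟨S.forall_mul_self_mem_lnuc_iff_iso_lnuc, ?_⟩
  simp only [Set.mem_inter_iff, forall_and]
  rw [← S.forall_mul_self_mem_lnuc_iff_iso_lnuc]
  exact and_congr_right S.forall_mul_self_mem_mnuc_iff_iso_rnuc
end

section
/- Let (Q,·,e) be a loop with left and middle nuclear squares. Then for all x ∈ Q: (1) x^ℓ·(x·x) = x^{ℓℓ} and L_{x^ℓ} ∘ L_{x·x} = L_{x^{ℓℓ}}; (2) L_{x^ℓ} ∘ L_x = L_x ∘ L_{x^r}; (3) L_x ∘ L_{x^r}^{-1} = L_{x·x^{rr}} and x·x^{rr} ∈ Nuc_ℓ(Q) ∩ Nuc_m(Q). (Here x^{ℓℓ} = (x^ℓ)^ℓ and x^{rr} = (x^r)^r.) -/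
/-!
The nuclear conditions are multiplicativity of left translations: `n` is left nuclear iff
`L_{nz} = L_n L_z` for all `z`, and middle nuclear iff `L_{zn} = L_z L_n` for all `z`. If `x·x` is
left nuclear, then `(x·x)·x^ℓ = x`, so `L_{x·x} L_{x^ℓ} = L_x`; if it is moreover middle nuclear,
then `L_{x^ℓ} L_{x·x} = L_{x^{ℓℓ}}`. Applied to `y = x^r`, for which `y^ℓ = x` and
`y^{ℓℓ} = x^ℓ`, these read `L_{y·y} L_x = L_{x^r}` and `L_x L_{y·y} = L_{x^ℓ}`. Both sides of (2)
therefore equal `L_x L_{y·y} L_x`, and `L_x L_{x^r}⁻¹ = L_{y·y}⁻¹` is the left translation by the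
nuclear element `(y·y)^r`.
-/

namespace LoopStr

variable {Q : Type*} (S : LoopStr Q)

lemma leftPerm_apply (a x : Q) : S.leftPerm a x = S.mul a x := rfl

lemma leftPerm_inv_apply (a x : Q) : (S.leftPerm a)⁻¹ x = S.ldiv a x := rfl

lemma leftPerm_e : S.leftPerm S.e = 1 :=
  Equiv.ext S.one_mul

lemma eq_linv_of_mul_eq_e {x y : Q} (hyx : S.mul y x = S.e) : y = S.linv x := by
  rw [linv, ← hyx, S.mul_rdiv]

section Nuclei

variable {S} {n : Q}

lemma mem_lnuc_iff_leftPerm_mul :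
    n ∈ S.lnuc ↔ ∀ z, S.leftPerm (S.mul n z) = S.leftPerm n * S.leftPerm z :=
  ⟨fun hn z => Equiv.ext (hn z), fun hn z => Equiv.ext_iff.mp (hn z)⟩

lemma mem_mnuc_iff_leftPerm_mul :
    n ∈ S.mnuc ↔ ∀ z, S.leftPerm (S.mul z n) = S.leftPerm z * S.leftPerm n :=
  ⟨fun hn z => Equiv.ext (hn z), fun hn z => Equiv.ext_iff.mp (hn z)⟩

lemma mul_linv_of_mem_lnuc (hn : n ∈ S.lnuc) (x : Q) : S.mul n (S.linv x) = S.rdiv n x := by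
  rw [← S.mul_rdiv x (S.mul n (S.linv x)), hn, S.linv_mul, S.mul_one]

lemma leftPerm_rinv_of_mem_lnuc (hn : n ∈ S.lnuc) : S.leftPerm (S.rinv n) = (S.leftPerm n)⁻¹ := by
  apply eq_inv_of_mul_eq_one_right
  rw [← mem_lnuc_iff_leftPerm_mul.mp hn, S.mul_rinv, S.leftPerm_e]

lemma rinv_mem_lnuc_s6 (hn : n ∈ S.lnuc) : S.rinv n ∈ S.lnuc := by
  refine mem_lnuc_iff_leftPerm_mul.mpr fun z => ?_
  have cancel : S.mul n (S.mul (S.rinv n) z) = z := by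
    rw [← hn, S.mul_rinv, S.one_mul]
  rw [leftPerm_rinv_of_mem_lnuc hn, eq_inv_mul_iff_mul_eq, ← mem_lnuc_iff_leftPerm_mul.mp hn,
    cancel]

lemma leftPerm_linv_of_mem_mnuc (hn : n ∈ S.mnuc) : S.leftPerm (S.linv n) = (S.leftPerm n)⁻¹ := by
  apply eq_inv_of_mul_eq_one_left
  rw [← mem_mnuc_iff_leftPerm_mul.mp hn, S.linv_mul, S.leftPerm_e]

lemma linv_eq_rinv_of_mem_mnuc (hn : n ∈ S.mnuc) : S.linv n = S.rinv n := by
  rw [← S.mul_one (S.linv n), ← leftPerm_apply, leftPerm_linv_of_mem_mnuc hn, leftPerm_inv_apply,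
    rinv]

lemma rinv_mem_mnuc_s6 (hn : n ∈ S.mnuc) : S.rinv n ∈ S.mnuc := by
  refine mem_mnuc_iff_leftPerm_mul.mpr fun z => ?_
  obtain ⟨t, rfl⟩ : ∃ t, S.mul t n = z := ⟨S.rdiv z n, S.rdiv_mul n z⟩
  rw [hn, S.mul_rinv, S.mul_one, ← linv_eq_rinv_of_mem_mnuc hn, leftPerm_linv_of_mem_mnuc hn,
    mem_mnuc_iff_leftPerm_mul.mp hn, mul_inv_cancel_right]

end Nuclei

section NuclearSquare

variable {S} {x : Q}

lemma sq_mul_linv (hl : S.mul x x ∈ S.lnuc) : S.mul (S.mul x x) (S.linv x) = x := by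
  rw [mul_linv_of_mem_lnuc hl, S.mul_rdiv]

lemma leftPerm_sq_mul_leftPerm_linv (hl : S.mul x x ∈ S.lnuc) :
    S.leftPerm (S.mul x x) * S.leftPerm (S.linv x) = S.leftPerm x := by
  rw [← mem_lnuc_iff_leftPerm_mul.mp hl, sq_mul_linv hl]

lemma linv_mul_sq (hl : S.mul x x ∈ S.lnuc) (hm : S.mul x x ∈ S.mnuc) :
    S.mul (S.linv x) (S.mul x x) = S.linv (S.linv x) := by
  apply S.eq_linv_of_mul_eq_e
  rw [hm, sq_mul_linv hl, S.linv_mul]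

lemma leftPerm_linv_mul_leftPerm_sq (hl : S.mul x x ∈ S.lnuc) (hm : S.mul x x ∈ S.mnuc) :
    S.leftPerm (S.linv x) * S.leftPerm (S.mul x x) = S.leftPerm (S.linv (S.linv x)) := by
  rw [← mem_mnuc_iff_leftPerm_mul.mp hm, linv_mul_sq hl hm]

lemma leftPerm_sq_rinv_mul_leftPerm (hl : S.mul (S.rinv x) (S.rinv x) ∈ S.lnuc) :
    S.leftPerm (S.mul (S.rinv x) (S.rinv x)) * S.leftPerm x = S.leftPerm (S.rinv x) := by
  simpa only [S.linv_rinv] using leftPerm_sq_mul_leftPerm_linv hl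

lemma leftPerm_mul_leftPerm_sq_rinv (hl : S.mul (S.rinv x) (S.rinv x) ∈ S.lnuc)
    (hm : S.mul (S.rinv x) (S.rinv x) ∈ S.mnuc) :
    S.leftPerm x * S.leftPerm (S.mul (S.rinv x) (S.rinv x)) = S.leftPerm (S.linv x) := by
  simpa only [S.linv_rinv] using leftPerm_linv_mul_leftPerm_sq hl hm

lemma leftPerm_linv_mul_leftPerm (hl : S.mul (S.rinv x) (S.rinv x) ∈ S.lnuc)
    (hm : S.mul (S.rinv x) (S.rinv x) ∈ S.mnuc) :
    S.leftPerm (S.linv x) * S.leftPerm x = S.leftPerm x * S.leftPerm (S.rinv x) := by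
  rw [← leftPerm_mul_leftPerm_sq_rinv hl hm, mul_assoc, leftPerm_sq_rinv_mul_leftPerm hl]

lemma leftPerm_mul_leftPerm_rinv_inv (hl : S.mul (S.rinv x) (S.rinv x) ∈ S.lnuc) :
    S.leftPerm x * (S.leftPerm (S.rinv x))⁻¹ =
      S.leftPerm (S.rinv (S.mul (S.rinv x) (S.rinv x))) := by
  rw [leftPerm_rinv_of_mem_lnuc hl, ← leftPerm_sq_rinv_mul_leftPerm hl, mul_inv_rev,
    mul_inv_cancel_left]

lemma mul_rinv_rinv (hl : S.mul (S.rinv x) (S.rinv x) ∈ S.lnuc) :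
    S.mul x (S.rinv (S.rinv x)) = S.rinv (S.mul (S.rinv x) (S.rinv x)) :=
  calc
    S.mul x (S.rinv (S.rinv x)) = (S.leftPerm x * (S.leftPerm (S.rinv x))⁻¹) S.e := rfl
    _ = S.leftPerm (S.rinv (S.mul (S.rinv x) (S.rinv x))) S.e := by
      rw [leftPerm_mul_leftPerm_rinv_inv hl]
    _ = S.rinv (S.mul (S.rinv x) (S.rinv x)) := S.mul_one _

end NuclearSquare

end LoopStr

/-- In a loop with left and middle nuclear squares, for all `x`:
(1) `x^ℓ·(x·x) = x^{ℓℓ}` and `L_{x^ℓ} ∘ L_{x·x} = L_{x^{ℓℓ}}`;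
(2) `L_{x^ℓ} ∘ L_x = L_x ∘ L_{x^r}`;
(3) `L_x ∘ L_{x^r}⁻¹ = L_{x·x^{rr}}` and `x·x^{rr} ∈ Nuc_ℓ ∩ Nuc_m`.
(Here `L_{x^r}⁻¹` is the map `y ↦ x^r \ y`.) -/
theorem lm_nuclear_sq_ids {Q : Type*} (S : LoopStr Q)
    (h : ∀ x : Q, S.mul x x ∈ S.lnuc ∩ S.mnuc) :
    ∀ x : Q,
      (S.mul (S.linv x) (S.mul x x) = S.linv (S.linv x) ∧
        S.leftMul (S.linv x) ∘ S.leftMul (S.mul x x) = S.leftMul (S.linv (S.linv x))) ∧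
      (S.leftMul (S.linv x) ∘ S.leftMul x = S.leftMul x ∘ S.leftMul (S.rinv x)) ∧
      (S.leftMul x ∘ S.ldiv (S.rinv x) = S.leftMul (S.mul x (S.rinv (S.rinv x))) ∧
        S.mul x (S.rinv (S.rinv x)) ∈ S.lnuc ∩ S.mnuc) := by
  intro x
  obtain ⟨hl, hm⟩ := h x
  obtain ⟨hl', hm'⟩ := h (S.rinv x)
  refine ⟨⟨LoopStr.linv_mul_sq hl hm, ?_⟩, ?_, ?_⟩
  · exact congrArg DFunLike.coe (LoopStr.leftPerm_linv_mul_leftPerm_sq hl hm)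
  · exact congrArg DFunLike.coe (LoopStr.leftPerm_linv_mul_leftPerm hl' hm')
  · rw [LoopStr.mul_rinv_rinv hl']
    exact ⟨congrArg DFunLike.coe (LoopStr.leftPerm_mul_leftPerm_rinv_inv hl'),
      LoopStr.rinv_mem_lnuc_s6 hl', LoopStr.rinv_mem_mnuc_s6 hm'⟩
end

section
/- Let (Q,·,e) be a loop with left and right nuclear squares. Then Nuc_ℓ(Q) ∩ Nuc_r(Q) is a normal subloop of Q. -/
/-!
Let `N ⊆ Nuc_ℓ ∩ Nuc_r` be a subloop containing all squares. For `a ∈ N`, `(xa)x = (xa)² / a` lies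
in `N`, hence so does `b = ((xa)x) / x²`; as `b` is left nuclear, `(bx)x = bx² = (xa)x`, so
`xa = bx`. Thus `xN ⊆ Nx`, and dually `Nx ⊆ xN`. Once cosets commute, nuclearity gives the rest:
`(xN)y = (Nx)y = N(xy) = (xy)N = x(yN) = x(Ny)`.
-/

namespace LoopStr

variable {Q : Type*} (S : LoopStr Q)

lemma mul_left_cancel_s11 {a b c : Q} (h : S.mul a b = S.mul a c) : b = c :=
  (S.leftPerm a).injective h

lemma mul_right_cancel_s11 {a b c : Q} (h : S.mul b a = S.mul c a) : b = c :=
  (S.rightPerm a).injective h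

/-- The opposite loop, with `x · y` replaced by `y · x` and the two divisions exchanged. It
transfers statements about the left nucleus to the right nucleus. -/
def op : LoopStr Q where
  mul x y := S.mul y x
  e := S.e
  ldiv a b := S.rdiv b a
  rdiv b a := S.ldiv a b
  one_mul := S.mul_one
  mul_one := S.one_mul
  mul_ldiv := S.rdiv_mul
  ldiv_mul := S.mul_rdiv
  rdiv_mul := S.mul_ldiv
  mul_rdiv := S.ldiv_mul

lemma lnuc_op : S.op.lnuc = S.rnuc :=
  Set.ext fun _ => ⟨fun h x y => (h y x).symm, fun h x y => (h y x).symm⟩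

lemma rnuc_op : S.op.rnuc = S.lnuc := S.op.lnuc_op.symm

variable {S} {M N : Set Q}

lemma IsSubloop.op (hN : S.IsSubloop N) : S.op.IsSubloop N := by
  obtain ⟨e_mem, mul_mem, ldiv_mem, rdiv_mem⟩ := hN
  exact ⟨e_mem, fun a ha b hb => mul_mem b hb a ha, fun a ha b hb => rdiv_mem b hb a ha,
    fun a ha b hb => ldiv_mem b hb a ha⟩

lemma IsSubloop.inter (hM : S.IsSubloop M) (hN : S.IsSubloop N) : S.IsSubloop (M ∩ N) := by
  obtain ⟨e_memM, mul_memM, ldiv_memM, rdiv_memM⟩ := hM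
  obtain ⟨e_memN, mul_memN, ldiv_memN, rdiv_memN⟩ := hN
  exact ⟨⟨e_memM, e_memN⟩,
    fun a ha b hb => ⟨mul_memM a ha.1 b hb.1, mul_memN a ha.2 b hb.2⟩,
    fun a ha b hb => ⟨ldiv_memM a ha.1 b hb.1, ldiv_memN a ha.2 b hb.2⟩,
    fun a ha b hb => ⟨rdiv_memM a ha.1 b hb.1, rdiv_memN a ha.2 b hb.2⟩⟩

lemma e_mem_lnuc : S.e ∈ S.lnuc := fun x y => by rw [S.one_mul, S.one_mul]

lemma mul_mem_lnuc {a b : Q} (ha : a ∈ S.lnuc) (hb : b ∈ S.lnuc) : S.mul a b ∈ S.lnuc :=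
  fun x y => by rw [ha, ha, hb, ha]

lemma ldiv_mem_lnuc {a b : Q} (ha : a ∈ S.lnuc) (hb : b ∈ S.lnuc) : S.ldiv a b ∈ S.lnuc :=
  fun x y => S.mul_left_cancel_s11 (a := a) <| by rw [← ha, ← ha, ← ha, S.mul_ldiv, hb]

lemma rinv_mul_of_mem_lnuc {a : Q} (ha : a ∈ S.lnuc) : S.mul (S.rinv a) a = S.e :=
  S.mul_left_cancel_s11 (a := a) <| by rw [← ha, S.mul_rinv, S.one_mul, S.mul_one]

lemma rdiv_eq_mul_rinv_of_mem_lnuc {a b : Q} (ha : a ∈ S.lnuc) (hb : b ∈ S.lnuc) :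
    S.rdiv b a = S.mul b (S.rinv a) :=
  S.mul_right_cancel_s11 (a := a) <| by rw [S.rdiv_mul, hb, rinv_mul_of_mem_lnuc ha, S.mul_one]

lemma rdiv_mem_lnuc {a b : Q} (ha : a ∈ S.lnuc) (hb : b ∈ S.lnuc) : S.rdiv b a ∈ S.lnuc := by
  rw [rdiv_eq_mul_rinv_of_mem_lnuc ha hb]
  exact mul_mem_lnuc hb (ldiv_mem_lnuc ha e_mem_lnuc)

variable (S) in
lemma isSubloop_lnuc : S.IsSubloop S.lnuc :=
  ⟨e_mem_lnuc, fun _ ha _ hb => mul_mem_lnuc ha hb, fun _ ha _ hb => ldiv_mem_lnuc ha hb,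
    fun _ hb _ ha => rdiv_mem_lnuc ha hb⟩

variable (S) in
lemma isSubloop_rnuc : S.IsSubloop S.rnuc := by
  rw [← lnuc_op]
  exact S.op.isSubloop_lnuc.op

lemma IsSubloop.mul_mul_mem_of_mul_self_mem (hN : S.IsSubloop N) (hsq : ∀ x, S.mul x x ∈ N)
    (x : Q) {a : Q} (ha : a ∈ N) (har : a ∈ S.rnuc) : S.mul (S.mul x a) x ∈ N := by
  obtain ⟨-, -, -, rdiv_mem⟩ := hN
  have eq_rdiv : S.mul (S.mul x a) x = S.rdiv (S.mul (S.mul x a) (S.mul x a)) a := by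
    rw [← har, S.mul_rdiv]
  rw [eq_rdiv]
  exact rdiv_mem _ (hsq _) a ha

lemma IsSubloop.image_mul_left_subset (hN : S.IsSubloop N) (hl : N ⊆ S.lnuc) (hr : N ⊆ S.rnuc)
    (hsq : ∀ x, S.mul x x ∈ N) (x : Q) :
    (fun a => S.mul x a) '' N ⊆ (fun a => S.mul a x) '' N := by
  rintro _ ⟨a, ha, rfl⟩
  have hxax := hN.mul_mul_mem_of_mul_self_mem hsq x ha (hr ha)
  obtain ⟨-, -, -, rdiv_mem⟩ := hN
  have hb := rdiv_mem _ hxax _ (hsq x)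
  exact ⟨_, hb, S.mul_right_cancel_s11 (a := x) <| by rw [hl hb, S.rdiv_mul]⟩

lemma IsSubloop.image_mul_right_subset (hN : S.IsSubloop N) (hl : N ⊆ S.lnuc) (hr : N ⊆ S.rnuc)
    (hsq : ∀ x, S.mul x x ∈ N) (x : Q) :
    (fun a => S.mul a x) '' N ⊆ (fun a => S.mul x a) '' N :=
  hN.op.image_mul_left_subset (S.lnuc_op ▸ hr) (S.rnuc_op ▸ hl) hsq x

lemma image_mul_mul_eq_of_image_mul_comm (hl : N ⊆ S.lnuc) (hr : N ⊆ S.rnuc)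
    (hcomm : ∀ x, (fun a => S.mul x a) '' N = (fun a => S.mul a x) '' N) (x y : Q) :
    (fun a => S.mul (S.mul x a) y) '' N = (fun a => S.mul x (S.mul a y)) '' N :=
  calc (fun a => S.mul (S.mul x a) y) '' N
      = (fun b => S.mul b y) '' ((fun a => S.mul x a) '' N) := by rw [Set.image_image]
    _ = (fun a => S.mul (S.mul a x) y) '' N := by rw [hcomm, Set.image_image]
    _ = (fun a => S.mul a (S.mul x y)) '' N := Set.image_congr fun _ ha => hl ha x y
    _ = (fun a => S.mul (S.mul x y) a) '' N := (hcomm _).symm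
    _ = (fun a => S.mul x (S.mul y a)) '' N := Set.image_congr fun _ ha => hr ha x y
    _ = (fun b => S.mul x b) '' ((fun a => S.mul y a) '' N) := by rw [Set.image_image]
    _ = (fun a => S.mul x (S.mul a y)) '' N := by rw [hcomm, Set.image_image]

end LoopStr

theorem lrnuc_normal_general {Q : Type*} (S : LoopStr Q) {N : Set Q} (hN : S.IsSubloop N)
    (hl : N ⊆ S.lnuc) (hr : N ⊆ S.rnuc) (hsq : ∀ x, S.mul x x ∈ N) : S.IsNormalSubloop N := by
  have hcomm (x : Q) : (fun a => S.mul x a) '' N = (fun a => S.mul a x) '' N :=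
    (hN.image_mul_left_subset hl hr hsq x).antisymm (hN.image_mul_right_subset hl hr hsq x)
  exact ⟨hN, hcomm, LoopStr.image_mul_mul_eq_of_image_mul_comm hl hr hcomm,
    fun x y => Set.image_congr fun _ ha => (hl ha x y).symm⟩

/-- In a loop with left and right nuclear squares,
`Nuc_ℓ(Q) ∩ Nuc_r(Q)` is a normal subloop of `Q`. -/
theorem lrnuc_normal {Q : Type*} (S : LoopStr Q)
    (h : ∀ x : Q, S.mul x x ∈ S.lnuc ∩ S.rnuc) :
    S.IsNormalSubloop (S.lnuc ∩ S.rnuc) :=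
  lrnuc_normal_general S (S.isSubloop_lnuc.inter S.isSubloop_rnuc) Set.inter_subset_left
    Set.inter_subset_right h
end
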